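/- Let F₂ = ⟨a,b⟩, fix n > 101, let w = a b a² b² ⋯ aⁿ bⁿ, and set w₀ = w, w₁ = ξχ(w), w₂ = ξ(w), w₃ = χ(w), w₄ = τ(w), w₅ = τξχ(w), w₆ = τξ(w), w₇ = τχ(w), and v_i = w_i⁻¹ for 0 ≤ i ≤ 7. Then for every ρ ∈ Fr₊(φ,ψ) and every z ∈ {w₀,v₀,…,w₇,v₇}, the cyclically reduced length satisfies ‖ρ(z)‖ ≥ (n(n−1)/2 − 2n)·(|ρ(a)| + |ρ(b)|). -/

import Mathlib

open MeasureTheory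

namespace IRSPaper


/-! ## Basic setup: the space of subgroups, invariant random subgroups -/

/-- The conjugation action of a group on its space of subgroups: `g • H = gHg⁻¹`. -/
def conjSub {G : Type*} [Group G] (g : G) (H : Subgroup G) : Subgroup G :=
  Subgroup.map ((MulAut.conj g).toMonoidHom) H

/-- The topology on the space of subgroups of `G`, induced from the product topology
on `G → Bool` (i.e. the topology of `2^G`). -/
noncomputable instance instTopSub (G : Type*) [Group G] : TopologicalSpace (Subgroup G) :=
  TopologicalSpace.induced
    (fun (H : Subgroup G) (g : G) => @decide (g ∈ H) (Classical.dec _)) inferInstance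

/-- The Borel σ-algebra on the space of subgroups. -/
noncomputable instance instMeasSub (G : Type*) [Group G] : MeasurableSpace (Subgroup G) :=
  borel _

instance instBorelSub (G : Type*) [Group G] : BorelSpace (Subgroup G) := ⟨rfl⟩

/-- An invariant random subgroup: a Borel probability measure on `Sub(G)` which is invariant
under the conjugation action of `G`. -/
def IsIRS {G : Type*} [Group G] (θ : Measure (Subgroup G)) : Prop :=
  IsProbabilityMeasure θ ∧ ∀ g : G, Measure.map (conjSub g) θ = θ

/-- The basic set `N_F = {H ∈ Sub(G) : F ⊆ H}`. -/
def NSet {G : Type*} [Group G] (F : Set G) : Set (Subgroup G) :=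
  {H : Subgroup G | F ⊆ (H : Set G)}

/-- For `Γ ≤ Δ` and `S ⊆ Δ`, the set of subgroups of `Γ` containing every element of `Γ`
whose image in `Δ` lies in `S`.  When `S = t⁻¹Ft ⊆ Γ`, this is exactly the basic set
`N_{t⁻¹Ft}^Γ ⊆ Sub(Γ)`. -/
def NpullSet {Δ : Type*} [Group Δ] (Γ : Subgroup Δ) (S : Set Δ) : Set (Subgroup ↥Γ) :=
  {Λ : Subgroup ↥Γ | ∀ x : ↥Γ, (x : Δ) ∈ S → x ∈ Λ}

/-- `T` is a transversal for the left cosets `Δ/Γ`: each left coset `dΓ` contains exactly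
one element of `T`. -/
def IsLeftTransversal {Δ : Type*} [Group Δ] (Γ : Subgroup Δ) (T : Set Δ) : Prop :=
  ∀ d : Δ, ∃! t : Δ, t ∈ T ∧ d⁻¹ * t ∈ Γ

/-- The defining property of the co-induced invariant random subgroup
`ν = CIND_Γ^Δ(θ)` (with respect to the transversal `T`):  for every finite `F ⊆ Δ`,
`ν(N_F) = 0` if `F ⊄ core_Δ(Γ)` and `ν(N_F) = ∏_{t ∈ T} θ(N_{t⁻¹Ft}^Γ)` if `F ⊆ core_Δ(Γ)`. -/
def CindSpec {Δ : Type*} [Group Δ] (Γ : Subgroup Δ) (T : Set Δ)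
    (θ : Measure (Subgroup ↥Γ)) (ν : Measure (Subgroup Δ)) : Prop :=
  ∀ F : Finset Δ,
    (¬ (F : Set Δ) ⊆ (Γ.normalCore : Set Δ) → ν (NSet (F : Set Δ)) = 0) ∧
    ((F : Set Δ) ⊆ (Γ.normalCore : Set Δ) →
      ν (NSet (F : Set Δ)) =
        ∏' t : T, θ (NpullSet Γ ((fun d => (t : Δ)⁻¹ * d * (t : Δ)) '' (F : Set Δ))))

/-- Ergodicity of a (not necessarily probability-) measure-preserving action given by
an explicit family of maps: every invariant measurable set is null or conull. -/
def ErgodicAct {G α : Type*} [MeasurableSpace α] (act : G → α → α) (μ : Measure α) : Prop :=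
  ∀ s : Set α, MeasurableSet s → (∀ g : G, act g ⁻¹' s = s) → μ s = 0 ∨ μ sᶜ = 0

/-- Weak mixing of an action: the diagonal action on the square is ergodic. -/
def WeaklyMixingAct {G α : Type*} [MeasurableSpace α] (act : G → α → α) (μ : Measure α) : Prop :=
  ErgodicAct (fun (g : G) (p : α × α) => (act g p.1, act g p.2)) (μ.prod μ)

/-- A measure is non-atomic (has no atoms) if every singleton is null. -/
def NonAtomicMeasure {α : Type*} [MeasurableSpace α] (μ : Measure α) : Prop :=
  ∀ x : α, μ {x} = 0

/-- The kernel of an IRS `θ` of `Γ`: the set of `γ ∈ Γ` with `θ(N_γ) = 1`.  (For a probability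
measure this set is a subgroup; taking `Subgroup.closure` makes it a `Subgroup` on the nose.) -/
def kerIRS {Δ : Type*} [Group Δ] (Γ : Subgroup Δ) (θ : Measure (Subgroup ↥Γ)) : Subgroup ↥Γ :=
  Subgroup.closure {x : ↥Γ | θ {Λ : Subgroup ↥Γ | x ∈ Λ} = 1}

/-- `core_Δ(ker(θ))`, viewed as a subgroup of `Δ`. -/
def coreKer {Δ : Type*} [Group Δ] (Γ : Subgroup Δ) (θ : Measure (Subgroup ↥Γ)) : Subgroup Δ :=
  ((kerIRS Γ θ).map Γ.subtype).normalCore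

/-! ## The free group `F₂`, small cancellation notions -/

/-- The free group on two generators. -/
abbrev F2 : Type := FreeGroup Bool

/-- The first generator `a` of `F₂`. -/
def genA : F2 := FreeGroup.of true

/-- The second generator `b` of `F₂`. -/
def genB : F2 := FreeGroup.of false

/-- The length `|x|` of the reduced word representing `x`. -/
def flen (x : F2) : ℕ := x.toWord.length

/-- `x` is cyclically reduced iff it has minimal length in its conjugacy class. -/
def CyclRed (x : F2) : Prop := ∀ g : F2, flen x ≤ flen (g * x * g⁻¹)

/-- The length `‖x‖` of the cyclically reduced word conjugate to `x`. -/
noncomputable def cyclen (x : F2) : ℕ := sInf (Set.range fun g : F2 => flen (g * x * g⁻¹))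

/-- `u` is an initial segment (prefix) of the reduced word of `x`. -/
def IsInitSeg (u x : F2) : Prop := ∃ v : F2, x = u * v ∧ flen x = flen u + flen v

/-- `S̃`: the set of all cyclically reduced cyclic conjugates of the words in `S` and of their
inverses.  (The cyclically reduced cyclic conjugates of a word `s` are exactly the cyclically
reduced elements of the conjugacy class of `s`.) -/
def tildeSet (S : Set F2) : Set F2 :=
  {y : F2 | CyclRed y ∧ ∃ s ∈ S, IsConj s y ∨ IsConj s⁻¹ y}

/-- The `C'(1/6)` small cancellation property for a set of words `S ⊆ F₂`. -/
def C'sixth (S : Set F2) : Prop :=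
  ∀ x ∈ tildeSet S, ∀ y ∈ tildeSet S, x ≠ y →
    ∀ u : F2, IsInitSeg u x → IsInitSeg u y → 6 * flen u < min (flen x) (flen y)

/-- The word `w = a b a² b² ⋯ aⁿ bⁿ`. -/
def wordW (n : ℕ) : F2 :=
  ((List.range n).map (fun i => genA ^ (i + 1) * genB ^ (i + 1))).prod

/-- The group of inner automorphisms of `F₂`, as a subgroup of `Aut(F₂)`;
this is the image of `F₂` in `Aut(F₂)`, identified with `F₂` itself. -/
def innerF2 : Subgroup (MulAut F2) := (MulAut.conj : F2 →* MulAut F2).range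

/-- number of positive-to-negative turns -/
def cnt : Bool → List (Bool × Bool) → ℕ
  | _, [] => 0
  | p, (_, e) :: L => (if p = true ∧ e = false then 1 else 0) + cnt e L

/-- weighted length: letter `x` has weight `p`, the other weight `q` -/
def wl (x : Bool) (p q : ℕ) : List (Bool × Bool) → ℕ
  | [] => 0
  | (y, _) :: L => (if y = x then p else q) + wl x p q L

lemma cnt_le (L : List (Bool × Bool)) : cnt false L ≤ cnt true L := by
  cases L with
  | nil => simp [cnt]
  | cons h t => obtain ⟨y, e⟩ := h; simp [cnt]

lemma cnt_true_le (L : List (Bool × Bool)) : cnt true L ≤ 1 + cnt false L := by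
  cases L with
  | nil => simp [cnt]
  | cons h t => obtain ⟨y, e⟩ := h; cases e <;> simp [cnt]

def HeadOK (x : Bool) : List (Bool × Bool) → List (Bool × Bool) → Prop
  | [], M => M = []
  | (y, e) :: _, M =>
    if y = x then
      if e = true then ∃ T, M = (x, true) :: T else ∃ T, M = (!x, false) :: (x, false) :: T
    else
      if e = true then (∃ T, M = (!x, true) :: T) ∨ (∃ T, M = (x, false) :: T)
      else M = [(!x, false)] ∨ (∃ T, M = (!x, false) :: (x, true) :: T) ∨
        (∃ T, M = (!x, false) :: (!x, false) :: T)

lemma step (x : Bool) (σ : F2 →* F2)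
    (h1 : σ (FreeGroup.of x) = FreeGroup.of x * FreeGroup.of (!x))
    (h2 : σ (FreeGroup.of (!x)) = FreeGroup.of (!x)) (p q : ℕ)
    (L : List (Bool × Bool)) (hL : FreeGroup.IsReduced L) :
    ∃ M, FreeGroup.IsReduced M ∧ FreeGroup.mk M = σ (FreeGroup.mk L) ∧
      cnt false M ≤ cnt false L ∧ cnt true M ≤ cnt true L ∧
      wl x p q M + 2 * q * cnt false L = wl x (p + q) q L ∧ HeadOK x L M := by
  have e1 : σ (FreeGroup.mk [(x, true)]) = FreeGroup.mk [(x, true), (!x, true)] := h1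
  have e2 : σ (FreeGroup.mk [(!x, true)]) = FreeGroup.mk [(!x, true)] := h2
  have e3 : σ (FreeGroup.mk [(x, false)]) = FreeGroup.mk [(!x, false), (x, false)] := by
    have : FreeGroup.mk [(x, false)] = (FreeGroup.mk [(x, true)])⁻¹ := by
      simp [FreeGroup.inv_mk, FreeGroup.invRev]
    rw [this, map_inv, e1]; simp [FreeGroup.inv_mk, FreeGroup.invRev]
  have e4 : σ (FreeGroup.mk [(!x, false)]) = FreeGroup.mk [(!x, false)] := by
    have : FreeGroup.mk [(!x, false)] = (FreeGroup.mk [(!x, true)])⁻¹ := by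
      simp [FreeGroup.inv_mk, FreeGroup.invRev]
    rw [this, map_inv, e2]
  induction L with
  | nil => exact ⟨[], by simp, by simp [← FreeGroup.one_eq_mk], by simp [cnt], by simp [cnt],
      by simp [wl, cnt], by simp [HeadOK]⟩
  | cons l L ih =>
    have hL' : FreeGroup.IsReduced L := hL.infix ⟨[l], [], by simp⟩
    obtain ⟨M, hM, hmk, c1, c2, hw, hh⟩ := ih hL'
    have hcons : ∀ (l : Bool × Bool) K, (FreeGroup.mk (l :: K) : F2) = FreeGroup.mk [l] * FreeGroup.mk K := by
      intro l K; simp [FreeGroup.mul_mk]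
    have key : ∀ N, (FreeGroup.mk N : F2) = σ (FreeGroup.mk [l]) * FreeGroup.mk M →
        FreeGroup.mk N = σ (FreeGroup.mk (l :: L)) := by
      intro N hN
      rw [hN, hmk, hcons l L, map_mul]
    have canc : ∀ (y : Bool) (T : List (Bool × Bool)),
        (FreeGroup.mk ((y, true) :: (y, false) :: T) : F2) = FreeGroup.mk T := by
      intro y T
      exact Quot.sound (FreeGroup.Red.Step.not (L₁ := []) (b := true))
    have shapes : (L = [] ∧ M = []) ∨
        (∃ L' T, L = (x, true) :: L' ∧ M = (x, true) :: T) ∨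
        (∃ L' T, L = (x, false) :: L' ∧ M = (!x, false) :: (x, false) :: T) ∨
        (∃ L' T, L = (!x, true) :: L' ∧ M = (!x, true) :: T) ∨
        (∃ L' T, L = (!x, true) :: L' ∧ M = (x, false) :: T) ∨
        (∃ L', L = (!x, false) :: L' ∧ M = [(!x, false)]) ∨
        (∃ L' T, L = (!x, false) :: L' ∧ M = (!x, false) :: (x, true) :: T) ∨
        (∃ L' T, L = (!x, false) :: L' ∧ M = (!x, false) :: (!x, false) :: T) := by
      rcases L with _ | ⟨⟨y', e'⟩, L⟩
      · left; exact ⟨rfl, hh⟩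
      · clear hmk c1 c2 hw hL hL' key hM e1 e2 e3 e4 h1 h2
        rcases eq_or_ne y' x with rfl | hy
        · cases e'
          · simp [HeadOK] at hh ⊢; grind
          · simp [HeadOK] at hh ⊢; grind
        · obtain rfl : y' = !x := by cases x <;> cases y' <;> simp_all
          cases e'
          · simp [HeadOK] at hh ⊢; grind
          · simp [HeadOK] at hh ⊢; grind
    have nx : x ≠ !x := by cases x <;> simp
    have nx' : (!x) ≠ x := by cases x <;> simp
    have canc' : ∀ (l : Bool × Bool) (y : Bool) (T : List (Bool × Bool)),
        (FreeGroup.mk (l :: (y, true) :: (y, false) :: T) : F2) = FreeGroup.mk (l :: T) := by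
      intro l y T
      rw [hcons, canc, ← hcons]
    obtain ⟨y, e⟩ := l
    have hy : y = x ∨ y = !x := by cases x <;> cases y <;> simp
    clear hh
    rcases hy with rfl | rfl <;> cases e
    · refine ⟨(!y, false) :: (y, false) :: M, ?_, key _ ?_, ?_, ?_, ?_, ?_⟩
      · rcases shapes with ⟨rfl, rfl⟩ | ⟨L', T, rfl, rfl⟩ | ⟨L', T, rfl, rfl⟩ | ⟨L', T, rfl, rfl⟩ |
          ⟨L', T, rfl, rfl⟩ | ⟨L', rfl, rfl⟩ | ⟨L', T, rfl, rfl⟩ | ⟨L', T, rfl, rfl⟩ <;>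
        simp [FreeGroup.isReduced_cons_cons, nx, nx'] at hL hM ⊢ <;> tauto
      · rw [e3, FreeGroup.mul_mk]; rfl
      · simp [cnt]; omega
      · simp [cnt]; omega
      · simp [cnt, wl]; omega
      · simp [HeadOK]
    · rcases shapes with ⟨rfl, rfl⟩ | ⟨L', T, rfl, rfl⟩ | ⟨L', T, rfl, rfl⟩ | ⟨L', T, rfl, rfl⟩ |
          ⟨L', T, rfl, rfl⟩ | ⟨L', rfl, rfl⟩ | ⟨L', T, rfl, rfl⟩ | ⟨L', T, rfl, rfl⟩
      on_goal 6 => refine ⟨[(y, true)], ?_, key _ ?_, ?_, ?_, ?_, ?_⟩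
      on_goal 12 => refine ⟨(y, true) :: (y, true) :: T, ?_, key _ ?_, ?_, ?_, ?_, ?_⟩
      on_goal 18 => refine ⟨(y, true) :: (!y, false) :: T, ?_, key _ ?_, ?_, ?_, ?_, ?_⟩
      on_goal 5 => refine ⟨(y, true) :: (!y, true) :: (y, false) :: T, ?_, key _ ?_, ?_, ?_, ?_, ?_⟩
      on_goal 4 => refine ⟨(y, true) :: (!y, true) :: (!y, true) :: T, ?_, key _ ?_, ?_, ?_, ?_, ?_⟩
      on_goal 3 => simp [FreeGroup.isReduced_cons_cons] at hL
      on_goal 2 => refine ⟨(y, true) :: (!y, true) :: (y, true) :: T, ?_, key _ ?_, ?_, ?_, ?_, ?_⟩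
      on_goal 1 => refine ⟨(y, true) :: (!y, true) :: [], ?_, key _ ?_, ?_, ?_, ?_, ?_⟩
      all_goals try simp only [FreeGroup.mul_mk, List.cons_append, List.nil_append, e1, canc, canc']
      all_goals try simp [FreeGroup.isReduced_cons_cons, nx'] at hL hM ⊢
      all_goals try simp [HeadOK]
      all_goals try tauto
      all_goals try simp [cnt, wl, nx'] at c1 c2 hw
      all_goals try simp [cnt, wl, nx']
      all_goals first
        | omega
        | linarith
    · refine ⟨(!x, false) :: M, ?_, key _ ?_, ?_, ?_, ?_, ?_⟩
      · rcases shapes with ⟨rfl, rfl⟩ | ⟨L', T, rfl, rfl⟩ | ⟨L', T, rfl, rfl⟩ | ⟨L', T, rfl, rfl⟩ |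
          ⟨L', T, rfl, rfl⟩ | ⟨L', rfl, rfl⟩ | ⟨L', T, rfl, rfl⟩ | ⟨L', T, rfl, rfl⟩ <;>
        simp [FreeGroup.isReduced_cons_cons, nx'] at hL hM ⊢ <;> tauto
      · rw [e4, FreeGroup.mul_mk]; rfl
      · simp [cnt]; omega
      · simp [cnt]; omega
      · simp [cnt, wl]; omega
      · rcases shapes with ⟨rfl, rfl⟩ | ⟨L', T, rfl, rfl⟩ | ⟨L', T, rfl, rfl⟩ | ⟨L', T, rfl, rfl⟩ |
          ⟨L', T, rfl, rfl⟩ | ⟨L', rfl, rfl⟩ | ⟨L', T, rfl, rfl⟩ | ⟨L', T, rfl, rfl⟩ <;>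
        simp [FreeGroup.isReduced_cons_cons, HeadOK] at hL ⊢
    · rcases shapes with ⟨rfl, rfl⟩ | ⟨L', T, rfl, rfl⟩ | ⟨L', T, rfl, rfl⟩ | ⟨L', T, rfl, rfl⟩ |
          ⟨L', T, rfl, rfl⟩ | ⟨L', rfl, rfl⟩ | ⟨L', T, rfl, rfl⟩ | ⟨L', T, rfl, rfl⟩
      on_goal 6 => simp [FreeGroup.isReduced_cons_cons] at hL
      on_goal 6 => simp [FreeGroup.isReduced_cons_cons] at hL
      on_goal 6 => simp [FreeGroup.isReduced_cons_cons] at hL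
      on_goal 5 => refine ⟨(!x, true) :: (x, false) :: T, ?_, key _ ?_, ?_, ?_, ?_, ?_⟩
      on_goal 4 => refine ⟨(!x, true) :: (!x, true) :: T, ?_, key _ ?_, ?_, ?_, ?_, ?_⟩
      on_goal 3 => refine ⟨(x, false) :: T, ?_, key _ ?_, ?_, ?_, ?_, ?_⟩
      on_goal 2 => refine ⟨(!x, true) :: (x, true) :: T, ?_, key _ ?_, ?_, ?_, ?_, ?_⟩
      on_goal 1 => refine ⟨(!x, true) :: [], ?_, key _ ?_, ?_, ?_, ?_, ?_⟩
      all_goals try simp only [FreeGroup.mul_mk, List.cons_append, List.nil_append, e2, canc, canc']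
      all_goals try simp [FreeGroup.isReduced_cons_cons, nx'] at hL hM ⊢
      all_goals try simp [HeadOK]
      all_goals try tauto
      all_goals try simp [cnt, wl, nx'] at c1 c2 hw
      all_goals try simp [cnt, wl, nx']
      all_goals first
        | omega
        | linarith

lemma flen_mul_le (x y : F2) : flen (x * y) ≤ flen x + flen y := FreeGroup.norm_mul_le x y
lemma flen_inv (x : F2) : flen x⁻¹ = flen x := FreeGroup.norm_inv_eq
lemma flen_pow_le (x : F2) (k : ℕ) : flen (x ^ k) ≤ k * flen x := by
  induction k with
  | zero => simp [flen]
  | succ k ih => rw [pow_succ, add_mul, one_mul]; exact (flen_mul_le _ _).trans (by omega)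

lemma le_cyclen (x : F2) (N : ℕ) (h : ∀ k, k * N ≤ flen (x ^ k)) : N ≤ cyclen x := by
  refine le_csInf (Set.range_nonempty _) ?_
  rintro _ ⟨g, rfl⟩
  show N ≤ flen (g * x * g⁻¹)
  by_contra! hc
  set k := 2 * flen g + 1 with hk
  have h1 : x ^ k = g⁻¹ * (g * x * g⁻¹) ^ k * g := by
    rw [conj_pow]; group
  have h2 := h k
  have h3 : flen (x ^ k) ≤ flen g + k * flen (g * x * g⁻¹) + flen g := by
    rw [h1]
    refine (flen_mul_le _ _).trans ?_
    have := flen_mul_le g⁻¹ ((g * x * g⁻¹) ^ k)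
    have := flen_pow_le (g * x * g⁻¹) k
    rw [flen_inv] at *
    omega
  have h4 : k * (flen (g * x * g⁻¹) + 1) ≤ k * N := Nat.mul_le_mul_left _ hc
  rw [mul_add] at h4
  omega

lemma cyclen_inv (x : F2) : cyclen x⁻¹ = cyclen x := by
  unfold cyclen
  congr 2
  funext g
  rw [← flen_inv]
  congr 1
  group

lemma wl_comm (x : Bool) (p q : ℕ) (L : List (Bool × Bool)) : wl (!x) p q L = wl x q p L := by
  induction L with
  | nil => rfl
  | cons l L ih =>
    obtain ⟨y, e⟩ := l
    rw [wl, wl, ih]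
    cases x <;> cases y <;> simp

lemma wl_one (L : List (Bool × Bool)) : wl true 1 1 L = L.length := by
  induction L with
  | nil => rfl
  | cons l L ih =>
    obtain ⟨y, e⟩ := l
    rw [wl, ih]
    simp; omega

/-- the bounded cancellation estimate for `ρ` with weights `p`, `q` -/
def Est (x : Bool) (ρ : MulAut F2) (p q : ℕ) : Prop :=
  flen (ρ (FreeGroup.of x)) ≤ p ∧ flen (ρ (FreeGroup.of (!x))) ≤ q ∧
  ∀ L, FreeGroup.IsReduced L →
    wl x p q L ≤ flen (ρ (FreeGroup.mk L)) + 2 * (p + q) * cnt false L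

lemma Est.symm {x : Bool} {ρ : MulAut F2} {p q : ℕ} (h : Est x ρ p q) : Est (!x) ρ q p := by
  obtain ⟨h1, h2, h3⟩ := h
  refine ⟨h2, by simpa using h1, fun L hL => ?_⟩
  rw [wl_comm, add_comm q p]
  exact h3 L hL

lemma Est.step {x : Bool} {ρ σ : MulAut F2} {p q : ℕ} (h : Est x ρ p q)
    (h1 : σ (FreeGroup.of x) = FreeGroup.of x * FreeGroup.of (!x))
    (h2 : σ (FreeGroup.of (!x)) = FreeGroup.of (!x)) : Est x (ρ * σ) (p + q) q := by
  obtain ⟨g1, g2, g3⟩ := h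
  refine ⟨?_, ?_, fun L hL => ?_⟩
  · rw [MulAut.mul_apply, h1, map_mul]
    exact (flen_mul_le _ _).trans (by omega)
  · rw [MulAut.mul_apply, h2]; exact g2
  · obtain ⟨M, hM, hmk, c1, c2, hw, -⟩ := IRSPaper.step x σ.toMonoidHom h1 h2 p q L hL
    have := g3 M hM
    rw [MulAut.mul_apply, ← hw]
    rw [hmk] at this
    change _ ≤ flen (ρ (σ (FreeGroup.mk L))) + _ at this
    nlinarith [Nat.mul_le_mul_left (2 * (p + q)) c1]

lemma exists_est (φ ψ : MulAut F2)
    (hφa : φ (FreeGroup.of true) = FreeGroup.of true * FreeGroup.of false)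
    (hφb : φ (FreeGroup.of false) = FreeGroup.of false)
    (hψa : ψ (FreeGroup.of true) = FreeGroup.of true)
    (hψb : ψ (FreeGroup.of false) = FreeGroup.of false * FreeGroup.of true)
    (ρ : MulAut F2) (hρ : ρ ∈ Submonoid.closure ({φ, ψ} : Set (MulAut F2))) :
    ∃ p q, Est true ρ p q := by
  induction hρ using Submonoid.closure_induction_right with
  | one =>
    refine ⟨1, 1, by simp [flen], by simp [flen], fun L hL => ?_⟩
    rw [wl_one, MulAut.one_apply, flen, FreeGroup.toWord_mk, hL.reduce_eq]
    omega
  | mul_right ρ _ σ hσ ih =>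
    obtain ⟨p, q, h⟩ := ih
    rcases hσ with rfl | hσ
    · exact ⟨_, _, h.step hφa hφb⟩
    · obtain rfl : σ = ψ := hσ
      exact ⟨_, _, (h.symm.step (x := false) hψb hψa).symm⟩

lemma reduced_of_two (g h : Bool × Bool) (hgh : g.1 ≠ h.1) (L : List (Bool × Bool))
    (hL : ∀ l ∈ L, l = g ∨ l = h) : FreeGroup.IsReduced L := by
  induction L with
  | nil => simp
  | cons a L ih =>
    have h1 := ih fun l hl => hL l (by simp [hl])
    cases L with
    | nil => simp
    | cons b L =>
      refine FreeGroup.isReduced_cons_cons.2 ⟨?_, h1⟩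
      rcases hL a (by simp) with rfl | rfl <;> rcases hL b (by simp) with rfl | rfl <;> grind

lemma cnt_append (p : Bool) (K L : List (Bool × Bool)) :
    cnt p (K ++ L) ≤ cnt p K + cnt true L := by
  induction K generalizing p with
  | nil => cases p <;> simp [cnt, cnt_le]
  | cons a K ih =>
    obtain ⟨y, e⟩ := a
    have := ih e
    simp only [List.cons_append, cnt]; omega

lemma cnt_replicate (p e y : Bool) (m : ℕ) (L : List (Bool × Bool)) :
    cnt p (List.replicate (m + 1) (y, e) ++ L) =
      (if p = true ∧ e = false then 1 else 0) + cnt e L := by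
  induction m generalizing p with
  | zero => simp [cnt]
  | succ m ih =>
    rw [List.replicate_succ, List.cons_append, cnt, ih]
    cases e <;> simp

lemma wl_append (x : Bool) (p q : ℕ) (K L : List (Bool × Bool)) :
    wl x p q (K ++ L) = wl x p q K + wl x p q L := by
  induction K with
  | nil => simp [wl]
  | cons a K ih =>
    obtain ⟨y, e⟩ := a
    simp only [List.cons_append, wl, ih]; omega

lemma wl_replicate (x : Bool) (p q m : ℕ) (y e : Bool) :
    wl x p q (List.replicate m (y, e)) = m * (if y = x then p else q) := by
  induction m with
  | zero => simp [wl]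
  | succ m ih => rw [List.replicate_succ, wl, ih]; ring

/-- the word `g h g² h² ⋯ gⁿ hⁿ` as a list -/
def bw (g h : Bool × Bool) : ℕ → List (Bool × Bool)
  | 0 => []
  | n + 1 => bw g h n ++ (List.replicate (n + 1) g ++ List.replicate (n + 1) h)

def pw (L : List (Bool × Bool)) : ℕ → List (Bool × Bool)
  | 0 => []
  | n + 1 => pw L n ++ L

lemma bw_mem (g h : Bool × Bool) (n : ℕ) : ∀ l ∈ bw g h n, l = g ∨ l = h := by
  induction n with
  | zero => simp [bw]
  | succ n ih => intro l hl; simp [bw] at hl; grind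

lemma pw_mem (L : List (Bool × Bool)) (n : ℕ) : ∀ l ∈ pw L n, l ∈ L := by
  induction n with
  | zero => simp [pw]
  | succ n ih => intro l hl; simp [pw] at hl; grind

lemma bw_cnt (g h : Bool × Bool) (n : ℕ) : cnt true (bw g h n) ≤ n := by
  induction n with
  | zero => simp [bw, cnt]
  | succ n ih =>
    rw [bw]
    refine (cnt_append _ _ _).trans ?_
    obtain ⟨y, e⟩ := g
    obtain ⟨y', e'⟩ := h
    have := cnt_replicate e e' y' n []
    rw [List.append_nil] at this
    rw [cnt_replicate, this]
    cases e <;> cases e' <;> simp [cnt] <;> omega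

lemma pw_cnt (L : List (Bool × Bool)) (k : ℕ) : cnt true (pw L k) ≤ k * cnt true L := by
  induction k with
  | zero => simp [pw, cnt]
  | succ n ih =>
    rw [pw]
    refine (cnt_append _ _ _).trans ?_
    rw [add_mul]; omega

lemma bw_wl (p q : ℕ) (g h : Bool × Bool) (hgh : g.1 ≠ h.1) (n : ℕ) :
    2 * wl true p q (bw g h n) = n * (n + 1) * (p + q) := by
  induction n with
  | zero => simp [bw, wl]
  | succ n ih =>
    rw [bw, wl_append, wl_append, mul_add, ih]
    obtain ⟨y, e⟩ := g
    obtain ⟨y', e'⟩ := h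
    rw [wl_replicate, wl_replicate]
    cases y <;> cases y' <;> simp at hgh ⊢ <;> ring

lemma pw_wl (x : Bool) (p q : ℕ) (L : List (Bool × Bool)) (k : ℕ) :
    wl x p q (pw L k) = k * wl x p q L := by
  induction k with
  | zero => simp [pw, wl]
  | succ n ih => rw [pw, wl_append, ih]; ring

lemma pw_mk (L : List (Bool × Bool)) (k : ℕ) :
    (FreeGroup.mk (pw L k) : F2) = FreeGroup.mk L ^ k := by
  induction k with
  | zero => simp [pw, ← FreeGroup.one_eq_mk]
  | succ n ih => rw [pw, ← FreeGroup.mul_mk, ih, pow_succ]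

lemma rep_mk (g : Bool × Bool) (k : ℕ) :
    (FreeGroup.mk (List.replicate k g) : F2) = FreeGroup.mk [g] ^ k := by
  induction k with
  | zero => simp [← FreeGroup.one_eq_mk]
  | succ n ih => rw [List.replicate_succ', ← FreeGroup.mul_mk, ih, pow_succ]

lemma est_cyclen (n : ℕ) (hn : 4 ≤ n) (ρ : MulAut F2) (p q : ℕ) (hE : Est true ρ p q)
    (g h : Bool × Bool) (hgh : g.1 ≠ h.1) :
    ((n * (n - 1) : ℚ) / 2 - 2 * n) *
      (flen (ρ (FreeGroup.of true)) + flen (ρ (FreeGroup.of false))) ≤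
        (cyclen (ρ (FreeGroup.mk (bw g h n))) : ℚ) := by
  obtain ⟨g1, g2, g3⟩ := hE
  have hw := bw_wl p q g h hgh n
  set W := wl true p q (bw g h n) with hW
  have hN : W - 2 * (p + q) * n ≤ cyclen (ρ (FreeGroup.mk (bw g h n))) := by
    apply le_cyclen
    intro k
    rw [← map_pow, ← pw_mk]
    have := g3 (pw (bw g h n) k) (reduced_of_two g h hgh _ fun l hl =>
      bw_mem g h n l (pw_mem _ _ l hl))
    rw [pw_wl, ← hW] at this
    have h1 := (cnt_le _).trans ((pw_cnt (bw g h n) k).trans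
      (Nat.mul_le_mul_left k (bw_cnt g h n)))
    have h2 := Nat.mul_le_mul_left (2 * (p + q)) h1
    rw [Nat.mul_sub, Nat.sub_le_iff_le_add]
    calc _ ≤ _ := this
      _ ≤ _ := by
        have : 2 * (p + q) * (k * n) = k * (2 * (p + q) * n) := by ring
        omega
  have hN' : (W : ℚ) ≤ cyclen (ρ (FreeGroup.mk (bw g h n))) + 2 * (p + q) * n := by
    exact_mod_cast Nat.sub_le_iff_le_add.1 hN
  have hw' : 2 * (W : ℚ) = n * (n + 1) * (p + q) := by exact_mod_cast hw
  have g1' : (flen (ρ (FreeGroup.of true)) : ℚ) ≤ p := by exact_mod_cast g1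
  have g2' : (flen (ρ (FreeGroup.of false)) : ℚ) ≤ q := by exact_mod_cast g2
  have hn' : (4 : ℚ) ≤ n := by exact_mod_cast hn
  have hc : (0 : ℚ) ≤ (n * (n + 1) : ℚ) / 2 - 2 * n := by nlinarith
  have hp : (0:ℚ) ≤ flen (ρ (FreeGroup.of true)) := by positivity
  have hq : (0:ℚ) ≤ flen (ρ (FreeGroup.of false)) := by positivity
  calc _ ≤ ((n * (n + 1) : ℚ) / 2 - 2 * n) *
      (flen (ρ (FreeGroup.of true)) + flen (ρ (FreeGroup.of false))) := by
        apply mul_le_mul_of_nonneg_right _ (by positivity)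
        nlinarith
    _ ≤ ((n * (n + 1) : ℚ) / 2 - 2 * n) * (p + q) :=
        mul_le_mul_of_nonneg_left (by linarith) hc
    _ ≤ _ := by nlinarith
lemma map_wordW (f : F2 →* F2) (g h : Bool × Bool) (hg : f genA = FreeGroup.mk [g])
    (hh : f genB = FreeGroup.mk [h]) (n : ℕ) :
    f (wordW n) = FreeGroup.mk (bw g h n) := by
  induction n with
  | zero => simp [wordW, bw, ← FreeGroup.one_eq_mk]
  | succ n ih =>
    have : wordW (n + 1) = wordW n * (genA ^ (n + 1) * genB ^ (n + 1)) := by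
      simp [wordW, List.range_succ]
    rw [this, map_mul, map_mul, map_pow, map_pow, ih, hg, hh, bw, ← FreeGroup.mul_mk,
      ← FreeGroup.mul_mk, rep_mk, rep_mk]

/-- **Lemma 8.15 (estimate of cyclically reduced length).** With
`χ(a)=a, χ(b)=b⁻¹`, `ξ(a)=a⁻¹, ξ(b)=b`, `τ(a)=b, τ(b)=a`, `φ(a)=ab, φ(b)=b`,
`ψ(a)=a, ψ(b)=ba`, let `w = a b a² b² ⋯ aⁿ bⁿ` (`n > 101`), and
`w₀ = w, w₁ = ξχ(w), w₂ = ξ(w), w₃ = χ(w), w₄ = τ(w), w₅ = τξχ(w), w₆ = τξ(w), w₇ = τχ(w)`,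
`v_i = w_i⁻¹`.  Then for every `ρ ∈ Fr₊(φ,ψ)` (the monoid generated by `φ,ψ`) and every
`z ∈ {w₀,v₀,…,w₇,v₇}` one has `‖ρ(z)‖ ≥ (n(n−1)/2 − 2n)·(|ρ(a)| + |ρ(b)|)`. -/
theorem cyclically_reduced_length_estimate (n : ℕ) (hn : 101 < n)
    (χ ξ τ φ ψ : MulAut F2)
    (hχa : χ genA = genA) (hχb : χ genB = genB⁻¹)
    (hξa : ξ genA = genA⁻¹) (hξb : ξ genB = genB)
    (hτa : τ genA = genB) (hτb : τ genB = genA)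
    (hφa : φ genA = genA * genB) (hφb : φ genB = genB)
    (hψa : ψ genA = genA) (hψb : ψ genB = genB * genA) :
    ∀ ρ ∈ Submonoid.closure ({φ, ψ} : Set (MulAut F2)),
      ∀ z ∈ [wordW n, ξ (χ (wordW n)), ξ (wordW n), χ (wordW n),
              τ (wordW n), τ (ξ (χ (wordW n))), τ (ξ (wordW n)), τ (χ (wordW n)),
              (wordW n)⁻¹, (ξ (χ (wordW n)))⁻¹, (ξ (wordW n))⁻¹, (χ (wordW n))⁻¹,
              (τ (wordW n))⁻¹, (τ (ξ (χ (wordW n))))⁻¹, (τ (ξ (wordW n)))⁻¹,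
              (τ (χ (wordW n)))⁻¹],
        ((n * (n - 1) : ℚ) / 2 - 2 * n) * (flen (ρ genA) + flen (ρ genB)) ≤
          (cyclen (ρ z) : ℚ) := by
  intro ρ hρ
  obtain ⟨p, q, hE⟩ := exists_est φ ψ hφa hφb hψa hψb ρ hρ
  have A0 : genA = FreeGroup.mk [(true, true)] := rfl
  have B0 : genB = FreeGroup.mk [(false, true)] := rfl
  have A1 : genA⁻¹ = FreeGroup.mk [(true, false)] := rfl
  have B1 : genB⁻¹ = FreeGroup.mk [(false, false)] := rfl
  have main : ∀ (f : MulAut F2) (g h : Bool × Bool), f genA = FreeGroup.mk [g] →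
      f genB = FreeGroup.mk [h] → g.1 ≠ h.1 →
      ((n * (n - 1) : ℚ) / 2 - 2 * n) * (flen (ρ genA) + flen (ρ genB)) ≤
          (cyclen (ρ (f (wordW n))) : ℚ) := by
    intro f g h hg hh hgh
    have := map_wordW f.toMonoidHom g h hg hh n
    change f (wordW n) = _ at this
    rw [this]
    exact est_cyclen n (by omega) ρ p q hE g h hgh
  have m0 := main 1 (true, true) (false, true) A0 B0 (by simp)
  have m1 := main (ξ * χ) (true, false) (false, false)
    (by rw [MulAut.mul_apply, hχa, hξa, A1]) (by rw [MulAut.mul_apply, hχb, map_inv, hξb, B1])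
    (by simp)
  have m2 := main ξ (true, false) (false, true) (by rw [hξa, A1]) (by rw [hξb, B0]) (by simp)
  have m3 := main χ (true, true) (false, false) (by rw [hχa, A0]) (by rw [hχb, B1]) (by simp)
  have m4 := main τ (false, true) (true, true) (by rw [hτa, B0]) (by rw [hτb, A0]) (by simp)
  have m5 := main (τ * (ξ * χ)) (false, false) (true, false)
    (by rw [MulAut.mul_apply, MulAut.mul_apply, hχa, hξa, map_inv, hτa, B1])
    (by rw [MulAut.mul_apply, MulAut.mul_apply, hχb, map_inv, hξb, map_inv, hτb, A1])
    (by simp)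
  have m6 := main (τ * ξ) (false, false) (true, true)
    (by rw [MulAut.mul_apply, hξa, map_inv, hτa, B1]) (by rw [MulAut.mul_apply, hξb, hτb, A0])
    (by simp)
  have m7 := main (τ * χ) (false, true) (true, false)
    (by rw [MulAut.mul_apply, hχa, hτa, B0]) (by rw [MulAut.mul_apply, hχb, map_inv, hτb, A1])
    (by simp)
  simp only [MulAut.mul_apply, MulAut.one_apply] at m0 m1 m2 m3 m4 m5 m6 m7
  intro z hz
  simp only [List.mem_cons, List.not_mem_nil, or_false] at hz
  rcases hz with rfl | rfl | rfl | rfl | rfl | rfl | rfl | rfl | rfl | rfl | rfl | rfl | rfl |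
    rfl | rfl | rfl
  all_goals try rw [map_inv ρ, cyclen_inv]
  all_goals assumption

end IRSPaper
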